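/- Let μ be a singular Borel probability measure on [0,1). Then the linear span of the exponential functions {e_n : n ∈ ℕ} (where e_n(x) = e^{2πinx}) is dense in L²(μ). -/

import Mathlib

open MeasureTheory Filter

/-!
Move the problem to the circle, where `z = fourier 1` and `A` denotes the disc algebra. A compact
set `K` that is null for Haar measure carries a small bump: a continuous `u ≥ 0` which is large on
`K` and has small mean. Trigonometric polynomials being dense, `mean u - u` is uniformly close to
the real part of some `h ∈ z A`, and then `exp h ∈ 1 + z A` is bounded by `2` everywhere and tiny
on `K`. If `ν` is singular, all but little of its mass lives on such a `K`, so `1` lies in the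
`L^p(ν)`-closure of `z A`. Multiplying by the unimodular function `z ^ n`, for any integer `n`,
shows that each exponential is in the closed span of the later ones; the closed span of
`{z ^ m | m ≥ n}` therefore does not depend on `n` and is all of `L^p(ν)`.
-/

open scoped ENNReal ComplexConjugate

theorem exp_sub_one_mem {𝕂 𝔸 : Type*} [NontriviallyNormedField 𝕂] [CharZero 𝕂]
    [ContinuousSMul ℚ 𝕂] [NormedRing 𝔸] [NormedAlgebra 𝕂 𝔸] [CompleteSpace 𝔸]
    {S : NonUnitalSubalgebra 𝕂 𝔸} (hS : IsClosed (S : Set 𝔸)) {a : 𝔸} (ha : a ∈ S) :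
    NormedSpace.exp a - 1 ∈ S := by
  have hpow (n : ℕ) : a ^ (n + 1) ∈ S := by
    induction n with
    | zero => simpa using ha
    | succ n ih => rw [pow_succ]; exact mul_mem ih ha
  have hsum : HasSum (fun n : ℕ ↦ ((n + 1).factorial : 𝕂)⁻¹ • a ^ (n + 1))
      (NormedSpace.exp a - 1) := by
    simpa using (hasSum_nat_add_iff' 1).2 (NormedSpace.exp_series_hasSum_exp' (𝕂 := 𝕂) a)
  rw [← hsum.tsum_eq]
  exact tsum_mem hS fun n ↦ SMulMemClass.smul_mem _ (hpow n)

theorem exp_continuousMap_apply {X : Type*} [TopologicalSpace X] [CompactSpace X] (f : C(X, ℂ))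
    (x : X) : NormedSpace.exp f x = Complex.exp (f x) := by
  rw [Complex.exp_eq_exp_ℂ]
  exact NormedSpace.map_exp (ContinuousMap.evalAlgHom ℂ ℂ x) (continuous_eval_const x) f

theorem integrable_continuousMap {X E : Type*} [TopologicalSpace X] [CompactSpace X]
    [MeasurableSpace X] [OpensMeasurableSpace X] [NormedAddCommGroup E] {μ : Measure X}
    [IsFiniteMeasureOnCompacts μ] (f : C(X, E)) : Integrable f μ :=
  f.continuous.integrable_of_hasCompactSupport (.of_compactSpace f)

theorem exists_isCompact_null_measure_compl_lt {X : Type*} [TopologicalSpace X] [T2Space X]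
    [MeasurableSpace X] [OpensMeasurableSpace X] {μ ν : Measure X} [IsFiniteMeasure μ]
    [μ.InnerRegularCompactLTTop] (h : μ.MutuallySingular ν) {ε : ℝ≥0∞} (hε : ε ≠ 0) :
    ∃ K, IsCompact K ∧ ν K = 0 ∧ μ Kᶜ < ε := by
  obtain ⟨s, hs, hμs, hνs⟩ := h
  obtain ⟨K, hKs, hK, hμK⟩ := hs.compl.exists_isCompact_sdiff_lt (measure_ne_top μ _) hε
  refine ⟨K, hK, measure_mono_null hKs hνs, lt_of_le_of_lt ?_ hμK⟩
  calc μ Kᶜ ≤ μ (s ∪ sᶜ \ K) := measure_mono fun x hx ↦ by by_cases x ∈ s <;> simp_all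
    _ ≤ μ s + μ (sᶜ \ K) := measure_union_le _ _
    _ = μ (sᶜ \ K) := by rw [hμs, zero_add]

theorem exists_continuous_eqOn_const_integral_lt {X : Type*} [TopologicalSpace X]
    [LocallyCompactSpace X] [RegularSpace X] [MeasurableSpace X] [BorelSpace X] {μ : Measure X}
    [IsFiniteMeasureOnCompacts μ] [μ.InnerRegularCompactLTTop] {K : Set X} (hK : IsCompact K)
    (hμK : μ K = 0) {M δ : ℝ} (hM : 0 < M) (hδ : 0 < δ) :
    ∃ u : C(X, ℝ), Set.EqOn u (fun _ ↦ M) K ∧ 0 ≤ u ∧ ∫ x, u x ∂μ < δ := by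
  have hinf : μ K < ENNReal.ofReal (δ / M) := by simp [hμK, hδ, hM]
  rw [hK.measure_eq_biInf_integral_hasCompactSupport μ] at hinf
  simp only [iInf_lt_iff] at hinf
  obtain ⟨f, hf, -, hfK, hf0, hfδ⟩ := hinf
  refine ⟨⟨fun x ↦ M * f x, by fun_prop⟩, fun x hx ↦ by simp [hfK hx],
    fun x ↦ mul_nonneg hM.le (hf0 x), ?_⟩
  have hint : ∫ x, f x ∂μ < δ / M := (ENNReal.ofReal_lt_ofReal_iff (by positivity)).1 hfδ
  calc ∫ x, M * f x ∂μ = (∫ x, f x ∂μ) * M := by rw [integral_const_mul, mul_comm]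
    _ < δ := (lt_div_iff₀ hM).1 hint

theorem exists_forall_eLpNorm_le {X E : Type*} [MeasurableSpace X] [NormedAddCommGroup E]
    (μ : Measure X) [IsFiniteMeasure μ] {p : ℝ≥0∞} (hp₁ : 1 ≤ p) (hp : p ≠ ∞) (C : ℝ) {ε : ℝ≥0∞}
    (hε : ε ≠ 0) :
    ∃ δ > (0 : ℝ), ∃ η ≠ (0 : ℝ≥0∞), ∀ (f : X → E) (s : Set X), MeasurableSet s → μ sᶜ < η →
      (∀ x, ‖f x‖ ≤ C) → (∀ x ∈ s, ‖f x‖ ≤ δ) → eLpNorm f p μ ≤ ε := by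
  have hε₂ : ε / 2 ≠ 0 := by simpa using hε
  obtain ⟨η, hη, hηC⟩ := exists_eLpNorm_indicator_le (μ := μ) hp C hε₂
  have huniv : μ Set.univ ^ p.toReal⁻¹ ≠ ∞ := by finiteness
  obtain ⟨δ, hδ, hδε⟩ := ENNReal.exists_nnreal_pos_mul_lt huniv hε₂
  refine ⟨δ, hδ, η, by simpa using hη.ne', fun f s hs hμs hfC hfδ ↦ ?_⟩
  have hle (x : X) : ‖f x‖ ≤ ‖(δ : ℝ) + sᶜ.indicator (fun _ ↦ C) x‖ := by
    refine le_trans ?_ (Real.le_norm_self _)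
    by_cases hx : x ∈ s
    · simpa [hx] using hfδ x hx
    · simpa [hx] using (hfC x).trans (le_add_of_nonneg_left δ.2)
  calc eLpNorm f p μ
      ≤ eLpNorm ((fun _ ↦ (δ : ℝ)) + sᶜ.indicator fun _ ↦ C) p μ := eLpNorm_mono hle
    _ ≤ eLpNorm (fun _ ↦ (δ : ℝ)) p μ + eLpNorm (sᶜ.indicator fun _ ↦ C) p μ :=
      eLpNorm_add_le aestronglyMeasurable_const
        (aestronglyMeasurable_const.indicator hs.compl) hp₁
    _ ≤ ε / 2 + ε / 2 := by
      gcongr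
      · refine le_trans ?_ hδε.le
        rw [mul_comm]
        simpa using eLpNorm_le_of_ae_bound (p := p) (μ := μ) (f := fun _ ↦ (δ : ℝ))
          (C := δ) (by simp)
      · exact hηC _ hμs.le
    _ = ε := ENNReal.add_halves ε

theorem mutuallySingular_map_of_ae_leftInverse {X Y : Type*} [MeasurableSpace X]
    [MeasurableSpace Y] {μ ν : Measure X} {φ : X → Y} {ψ : Y → X} (hφ : Measurable φ)
    (hψ : Measurable ψ) (hμ : ψ ∘ φ =ᵐ[μ] id) (hν : ψ ∘ φ =ᵐ[ν] id) (h : μ.MutuallySingular ν) :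
    (μ.map φ).MutuallySingular (ν.map φ) := by
  obtain ⟨s, hs, hμs, hνs⟩ := h
  refine ⟨ψ ⁻¹' s, hψ hs, ?_, ?_⟩
  · rw [Measure.map_apply hφ (hψ hs), ← Set.preimage_comp, ← hμs]
    exact measure_congr (hμ.preimage s)
  · rw [Measure.map_apply hφ (hψ hs).compl, ← Set.preimage_compl, ← Set.preimage_comp, ← hνs]
    exact measure_congr (hν.preimage sᶜ)

theorem compMeasurePreserving_surjective {X Y E : Type*} [MeasurableSpace X] [MeasurableSpace Y]
    [NormedAddCommGroup E] {p : ℝ≥0∞} {μ : Measure X} {ν : Measure Y} {φ : X → Y} {ψ : Y → X}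
    (hφ : MeasurePreserving φ μ ν) (hψ : Measurable ψ) (h : ψ ∘ φ =ᵐ[μ] id) :
    Function.Surjective (Lp.compMeasurePreserving (E := E) (p := p) φ hφ) := by
  have hψ' : MeasurePreserving ψ ν μ := by
    refine ⟨hψ, ?_⟩
    rw [← hφ.map_eq, Measure.map_map hψ hφ.measurable, Measure.map_congr h, Measure.map_id]
  refine fun f ↦ ⟨Lp.compMeasurePreserving ψ hψ' f, Lp.ext ?_⟩
  calc _ =ᵐ[μ] Lp.compMeasurePreserving ψ hψ' f ∘ φ := Lp.coeFn_compMeasurePreserving _ hφ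
    _ =ᵐ[μ] (f ∘ ψ) ∘ φ :=
      hφ.quasiMeasurePreserving.ae_eq_comp (Lp.coeFn_compMeasurePreserving f hψ')
    _ =ᵐ[μ] f := h.fun_comp f

section Circle

variable {T : ℝ}

variable (T) in
/-- The space `zⁿ A`, where `z = fourier 1` and `A` is the disc algebra viewed as a space of
continuous functions on the circle: the uniform closure of the trigonometric polynomials with
frequencies `≥ n`. For `n = 1` it is the maximal ideal of `A` of functions vanishing at the
origin. -/
noncomputable def shiftedDiscAlgebra (n : ℤ) : Submodule ℂ C(AddCircle T, ℂ) :=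
  (Submodule.span ℂ (fourier '' Set.Ici n)).topologicalClosure

theorem fourier_mem_shiftedDiscAlgebra {m n : ℤ} (h : n ≤ m) :
    fourier m ∈ shiftedDiscAlgebra T n :=
  Submodule.le_topologicalClosure _ <| Submodule.subset_span ⟨m, h, rfl⟩

theorem shiftedDiscAlgebra_antitone : Antitone (shiftedDiscAlgebra T) := fun _ _ h ↦
  Submodule.topologicalClosure_mono <| Submodule.span_mono <| Set.image_mono <|
    Set.Ici_subset_Ici.2 h

theorem mul_mem_shiftedDiscAlgebra {m n : ℤ} {f g : C(AddCircle T, ℂ)}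
    (hf : f ∈ shiftedDiscAlgebra T m) (hg : g ∈ shiftedDiscAlgebra T n) :
    f * g ∈ shiftedDiscAlgebra T (m + n) := by
  refine map_mem_closure₂ continuous_mul hf hg fun a ha b hb ↦ ?_
  have hab := Submodule.mul_mem_mul ha hb
  rw [Submodule.span_mul_span] at hab
  refine Submodule.span_mono ?_ hab
  rintro _ ⟨_, ⟨j, hj, rfl⟩, _, ⟨k, hk, rfl⟩, rfl⟩
  exact ⟨j + k, add_le_add (Set.mem_Ici.1 hj) (Set.mem_Ici.1 hk), by ext; exact fourier_add⟩

variable [hT : Fact (0 < T)]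

theorem exp_sub_one_mem_shiftedDiscAlgebra {f : C(AddCircle T, ℂ)}
    (hf : f ∈ shiftedDiscAlgebra T 1) : NormedSpace.exp f - 1 ∈ shiftedDiscAlgebra T 1 :=
  exp_sub_one_mem (S := (shiftedDiscAlgebra T 1).toNonUnitalSubalgebra fun _ _ hf hg ↦
    shiftedDiscAlgebra_antitone (by simp) (mul_mem_shiftedDiscAlgebra hf hg))
    (Submodule.isClosed_topologicalClosure _) hf

theorem integral_fourier (n : ℤ) :
    ∫ t : AddCircle T, fourier n t ∂AddCircle.haarAddCircle = if n = 0 then 1 else 0 := by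
  split_ifs with h
  · simp [h]
  · exact integral_eq_zero_of_add_right_eq_neg (fourier_add_half_inv_index h hT.out)

theorem exists_eq_integral_add_add_conj {q : C(AddCircle T, ℂ)}
    (hq : q ∈ Submodule.span ℂ (Set.range (fourier (T := T)))) :
    ∃ a ∈ shiftedDiscAlgebra T 1, ∃ b ∈ shiftedDiscAlgebra T 1,
      ∀ t, q t = ∫ s, q s ∂AddCircle.haarAddCircle + a t + conj (b t) := by
  induction hq using Submodule.span_induction with
  | mem q hq =>
    obtain ⟨n, rfl⟩ := hq
    rw [integral_fourier]
    rcases lt_trichotomy n 0 with hn | rfl | hn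
    · refine ⟨0, zero_mem _, fourier (-n), fourier_mem_shiftedDiscAlgebra (by lia), fun t ↦ ?_⟩
      simp [hn.ne]
    · exact ⟨0, zero_mem _, 0, zero_mem _, by simp⟩
    · exact ⟨fourier n, fourier_mem_shiftedDiscAlgebra hn, 0, zero_mem _, by simp [hn.ne']⟩
  | zero => exact ⟨0, zero_mem _, 0, zero_mem _, by simp⟩
  | add q q' _ _ hq hq' =>
    obtain ⟨a, ha, b, hb, h⟩ := hq
    obtain ⟨a', ha', b', hb', h'⟩ := hq'
    refine ⟨a + a', add_mem ha ha', b + b', add_mem hb hb', fun t ↦ ?_⟩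
    simp only [ContinuousMap.add_apply, map_add]
    rw [integral_add (integrable_continuousMap q) (integrable_continuousMap q'), h t, h' t]
    ring
  | smul c q _ hq =>
    obtain ⟨a, ha, b, hb, h⟩ := hq
    refine ⟨c • a, Submodule.smul_mem _ _ ha, conj c • b, Submodule.smul_mem _ _ hb, fun t ↦ ?_⟩
    simp only [ContinuousMap.smul_apply, smul_eq_mul, map_mul, Complex.conj_conj]
    rw [integral_const_mul, h t]
    ring

theorem exists_abs_re_sub_le (u : C(AddCircle T, ℝ)) {δ : ℝ} (hδ : 0 < δ) :
    ∃ h ∈ shiftedDiscAlgebra T 1,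
      ∀ t, |(h t).re - (u t - ∫ s, u s ∂AddCircle.haarAddCircle)| ≤ δ := by
  let w : C(AddCircle T, ℂ) := ⟨fun t ↦ u t, by fun_prop⟩
  have hw : w ∈ (Submodule.span ℂ (Set.range (fourier (T := T)))).topologicalClosure := by
    simp [span_fourier_closure_eq_top]
  obtain ⟨q, hq, hwq⟩ := Metric.mem_closure_iff.1 hw (δ / 2) (half_pos hδ)
  obtain ⟨a, ha, b, hb, hab⟩ := exists_eq_integral_add_add_conj hq
  have hqw (t) : ‖q t - w t‖ ≤ δ / 2 := by
    rw [← dist_eq_norm, dist_comm]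
    exact (ContinuousMap.dist_apply_le_dist t).trans hwq.le
  have hmean : ‖∫ t, q t - w t ∂AddCircle.haarAddCircle‖ ≤ δ / 2 := by
    simpa using norm_integral_le_of_norm_le_const (μ := AddCircle.haarAddCircle)
      (Eventually.of_forall hqw)
  refine ⟨a + b, add_mem ha hb, fun t ↦ ?_⟩
  have hre : ((a + b) t).re - (u t - ∫ s, u s ∂AddCircle.haarAddCircle) =
      (q t - w t - ∫ s, q s - w s ∂AddCircle.haarAddCircle).re := by
    have hwu : ∫ s, w s ∂AddCircle.haarAddCircle = (∫ s, u s ∂AddCircle.haarAddCircle : ℝ) :=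
      integral_ofReal
    rw [integral_sub (integrable_continuousMap q) (integrable_continuousMap w), hwu, hab t]
    simp only [w, ContinuousMap.add_apply, ContinuousMap.coe_mk, Complex.add_re, Complex.sub_re,
      Complex.conj_re, Complex.ofReal_re]
    ring
  calc |((a + b) t).re - (u t - ∫ s, u s ∂AddCircle.haarAddCircle)|
      ≤ ‖q t - w t - ∫ s, q s - w s ∂AddCircle.haarAddCircle‖ := by
        rw [hre]; exact Complex.abs_re_le_norm _
    _ ≤ ‖q t - w t‖ + ‖∫ s, q s - w s ∂AddCircle.haarAddCircle‖ := norm_sub_le _ _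
    _ ≤ δ := by linarith [hqw t]

theorem exists_norm_one_add_le {K : Set (AddCircle T)} (hK : IsCompact K)
    (hK₀ : AddCircle.haarAddCircle K = 0) {δ : ℝ} (hδ : 0 < δ) :
    ∃ f ∈ shiftedDiscAlgebra T 1, (∀ t, ‖1 + f t‖ ≤ 2) ∧ ∀ t ∈ K, ‖1 + f t‖ ≤ δ := by
  have hlog : 0 < Real.log 2 / 2 := by positivity
  obtain ⟨u, huK, hu₀, hu⟩ :=
    exists_continuous_eqOn_const_integral_lt hK hK₀ (div_pos two_pos hδ) hlog
  obtain ⟨h, hh, hre⟩ := exists_abs_re_sub_le (-u) hlog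
  have hnorm (t) : ‖1 + (NormedSpace.exp h - 1) t‖ ≤ 2 * Real.exp (-u t) := by
    have hle : (h t).re ≤ Real.log 2 + -u t := by
      have := (abs_le.1 (hre t)).2
      simp only [ContinuousMap.neg_apply, integral_neg] at this
      linarith
    calc ‖1 + (NormedSpace.exp h - 1) t‖ = Real.exp (h t).re := by
          rw [← Complex.norm_exp, ← exp_continuousMap_apply]; simp
      _ ≤ Real.exp (Real.log 2 + -u t) := Real.exp_le_exp.2 hle
      _ = 2 * Real.exp (-u t) := by rw [Real.exp_add, Real.exp_log two_pos]
  refine ⟨NormedSpace.exp h - 1, exp_sub_one_mem_shiftedDiscAlgebra hh, fun t ↦ ?_, fun t ht ↦ ?_⟩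
  · refine (hnorm t).trans ?_
    have : Real.exp (-u t) ≤ 1 := Real.exp_le_one_iff.2 (neg_nonpos.2 (hu₀ t))
    linarith
  · calc ‖1 + (NormedSpace.exp h - 1) t‖
        ≤ 2 * Real.exp (-(2 / δ)) := by simpa only [huK ht] using hnorm t
      _ ≤ 2 * (2 / δ)⁻¹ := by
        rw [Real.exp_neg]
        gcongr
        linarith [Real.add_one_le_exp (2 / δ)]
      _ = δ := by field_simp

variable {p : ℝ≥0∞} [hp₁ : Fact (1 ≤ p)] {ν : Measure (AddCircle T)} [IsFiniteMeasure ν]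

theorem norm_toLp_fourier_mul (n : ℤ) (f : C(AddCircle T, ℂ)) :
    ‖ContinuousMap.toLp p ν ℂ (fourier n * f)‖ = ‖ContinuousMap.toLp p ν ℂ f‖ := by
  rw [Lp.norm_def, Lp.norm_def]
  congr 1
  refine eLpNorm_congr_norm_ae ?_
  filter_upwards [ContinuousMap.coeFn_toLp (p := p) (𝕜 := ℂ) ν (fourier n * f),
    ContinuousMap.coeFn_toLp (p := p) (𝕜 := ℂ) ν f] with t hfg hf
  rw [hfg, hf, ContinuousMap.mul_apply, norm_mul, fourier_apply, Circle.norm_coe, one_mul]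

theorem exists_norm_toLp_one_add_lt (hp : p ≠ ∞)
    (hν : ν.MutuallySingular AddCircle.haarAddCircle) {ε : ℝ} (hε : 0 < ε) :
    ∃ f ∈ shiftedDiscAlgebra T 1, ‖ContinuousMap.toLp p ν ℂ (1 + f)‖ < ε := by
  obtain ⟨δ, hδ, η, hη, hsmall⟩ :=
    exists_forall_eLpNorm_le (E := ℂ) ν hp₁.out hp 2 (ENNReal.ofReal_pos.2 (half_pos hε)).ne'
  obtain ⟨K, hK, hK₀, hKη⟩ := exists_isCompact_null_measure_compl_lt hν hη
  obtain ⟨f, hf, hf₂, hfK⟩ := exists_norm_one_add_le hK hK₀ hδ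
  refine ⟨f, hf, lt_of_le_of_lt ?_ (half_lt_self hε)⟩
  rw [Lp.norm_def, eLpNorm_congr_ae (ContinuousMap.coeFn_toLp ν _)]
  exact ENNReal.toReal_le_of_le_ofReal (half_pos hε).le
    (hsmall _ K hK.measurableSet hKη hf₂ hfK)

variable (p ν) in
/-- The closed span in `L^p(ν)` of the exponentials with frequencies `≥ n` (for `n = 0` the Hardy
space `H^p(ν)`), used to measure how much of `L^p(ν)` is lost on discarding the earlier ones. -/
noncomputable def shiftedHardySpace (n : ℤ) : Submodule ℂ (Lp ℂ p ν) :=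
  (Submodule.span ℂ ((fun m ↦ ContinuousMap.toLp p ν ℂ (fourier m)) ''
    Set.Ici n)).topologicalClosure

theorem isClosed_shiftedHardySpace (n : ℤ) :
    IsClosed (shiftedHardySpace p ν n : Set (Lp ℂ p ν)) :=
  Submodule.isClosed_topologicalClosure _

theorem toLp_fourier_mem_shiftedHardySpace {m n : ℤ} (h : n ≤ m) :
    ContinuousMap.toLp p ν ℂ (fourier m) ∈ shiftedHardySpace p ν n :=
  Submodule.le_topologicalClosure _ <| Submodule.subset_span ⟨m, h, rfl⟩

theorem toLp_mem_shiftedHardySpace {n : ℤ} {f : C(AddCircle T, ℂ)}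
    (hf : f ∈ shiftedDiscAlgebra T n) : ContinuousMap.toLp p ν ℂ f ∈ shiftedHardySpace p ν n := by
  have h := Submodule.topologicalClosure_map _ _ (Submodule.mem_map_of_mem
    (f := (ContinuousMap.toLp p ν ℂ : C(AddCircle T, ℂ) →L[ℂ] Lp ℂ p ν).toLinearMap) hf)
  rwa [Submodule.map_span, Set.image_image] at h

theorem toLp_fourier_mem_shiftedHardySpace_succ (hp : p ≠ ∞)
    (hν : ν.MutuallySingular AddCircle.haarAddCircle) (n : ℤ) :
    ContinuousMap.toLp p ν ℂ (fourier n) ∈ shiftedHardySpace p ν (n + 1) := by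
  refine (Metric.mem_of_closed' (isClosed_shiftedHardySpace (n + 1))).2 fun ε hε ↦ ?_
  obtain ⟨f, hf, hfε⟩ := exists_norm_toLp_one_add_lt hp hν hε
  have hmem : fourier n * f ∈ shiftedDiscAlgebra T (n + 1) :=
    mul_mem_shiftedDiscAlgebra (fourier_mem_shiftedDiscAlgebra le_rfl) hf
  refine ⟨-ContinuousMap.toLp p ν ℂ (fourier n * f),
    neg_mem (toLp_mem_shiftedHardySpace hmem), ?_⟩
  calc dist (ContinuousMap.toLp p ν ℂ (fourier n)) (-ContinuousMap.toLp p ν ℂ (fourier n * f))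
      = ‖ContinuousMap.toLp p ν ℂ (fourier n * (1 + f))‖ := by
        rw [dist_eq_norm, sub_neg_eq_add, ← map_add, mul_one_add]
    _ = ‖ContinuousMap.toLp p ν ℂ (1 + f)‖ := norm_toLp_fourier_mul n _
    _ < ε := hfε

theorem shiftedHardySpace_monotone (hp : p ≠ ∞)
    (hν : ν.MutuallySingular AddCircle.haarAddCircle) : Monotone (shiftedHardySpace p ν) := by
  refine monotone_int_of_le_succ fun n ↦ Submodule.topologicalClosure_minimal _
    (Submodule.span_le.2 ?_) (isClosed_shiftedHardySpace _)
  rintro _ ⟨m, hm : n ≤ m, rfl⟩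
  rcases hm.eq_or_lt with rfl | hm
  · exact toLp_fourier_mem_shiftedHardySpace_succ hp hν n
  · exact toLp_fourier_mem_shiftedHardySpace hm

theorem shiftedHardySpace_eq_top (hp : p ≠ ∞)
    (hν : ν.MutuallySingular AddCircle.haarAddCircle) (n : ℤ) : shiftedHardySpace p ν n = ⊤ := by
  have htop := (ContinuousMap.toLp_denseRange ℂ ν ℂ hp).topologicalClosure_map_submodule
    (span_fourier_closure_eq_top (T := T))
  rw [eq_top_iff, ← htop]
  refine Submodule.topologicalClosure_minimal _ ?_ (isClosed_shiftedHardySpace n)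
  rw [Submodule.map_span, Submodule.span_le]
  rintro _ ⟨_, ⟨m, rfl⟩, rfl⟩
  rcases le_total n m with h | h
  · exact toLp_fourier_mem_shiftedHardySpace h
  · exact shiftedHardySpace_monotone hp hν h (toLp_fourier_mem_shiftedHardySpace le_rfl)

theorem equivIco_comp_coe_ae_eq {μ : Measure ℝ} {a : ℝ} (hμ : μ (Set.Ico a (a + T))ᶜ = 0) :
    (fun t ↦ (AddCircle.equivIco T a t : ℝ)) ∘ ((↑) : ℝ → AddCircle T) =ᵐ[μ] id := by
  filter_upwards [mem_ae_iff.2 hμ] with x hx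
  simp [AddCircle.equivIco_coe_eq hx]

theorem measurable_equivIco (a : ℝ) :
    Measurable fun t : AddCircle T ↦ (AddCircle.equivIco T a t : ℝ) :=
  measurable_subtype_coe.comp (AddCircle.measurableEquivIco T a).measurable

theorem map_coe_mutuallySingular_haarAddCircle {μ : Measure ℝ} {a : ℝ}
    (hμ : μ (Set.Ico a (a + T))ᶜ = 0) (hsing : μ.MutuallySingular volume) :
    (μ.map ((↑) : ℝ → AddCircle T)).MutuallySingular AddCircle.haarAddCircle := by
  have hrestrict : (volume.restrict (Set.Ico a (a + T))) (Set.Ico a (a + T))ᶜ = 0 := by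
    simp [Measure.restrict_apply measurableSet_Ico.compl]
  have hmap := mutuallySingular_map_of_ae_leftInverse AddCircle.measurable_mk'
    (measurable_equivIco (T := T) a) (equivIco_comp_coe_ae_eq hμ)
    (equivIco_comp_coe_ae_eq hrestrict)
    (hsing.mono_ac .rfl Measure.restrict_le_self.absolutelyContinuous)
  rw [restrict_Ico_eq_restrict_Ioc, (AddCircle.measurePreserving_mk T a).map_eq,
    AddCircle.volume_eq_smul_haarAddCircle] at hmap
  exact hmap.mono_ac .rfl (Measure.absolutelyContinuous_smul (by simpa using hT.out))

end Circle

theorem span_exponentials_dense_general {T a : ℝ} [Fact (0 < T)] {p : ℝ≥0∞}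
    [Fact (1 ≤ p)] (hp : p ≠ ∞) (μ : Measure ℝ) [IsFiniteMeasure μ]
    (hsupp : μ (Set.Ico a (a + T))ᶜ = 0) (hsing : μ.MutuallySingular volume)
    (e : ℕ → Lp ℂ p μ)
    (he : ∀ n : ℕ, e n =ᵐ[μ] fun x : ℝ ↦ Complex.exp (2 * Real.pi * Complex.I * n * x / T)) :
    Dense (Submodule.span ℂ (Set.range e) : Set (Lp ℂ p μ)) := by
  let φ : ℝ → AddCircle T := (↑)
  have hφ : MeasurePreserving φ μ (μ.map φ) := ⟨AddCircle.measurable_mk', rfl⟩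
  let L : Lp ℂ p (μ.map φ) →L[ℂ] Lp ℂ p μ :=
    (Lp.compMeasurePreservingₗᵢ ℂ φ hφ).toContinuousLinearMap
  have hL : Function.Surjective L :=
    compMeasurePreserving_surjective hφ (measurable_equivIco a) (equivIco_comp_coe_ae_eq hsupp)
  have hLe (n : ℕ) : L (ContinuousMap.toLp p (μ.map φ) ℂ (fourier n)) = e n := by
    refine Lp.ext <| (Lp.coeFn_compMeasurePreserving _ hφ).trans <|
      (hφ.quasiMeasurePreserving.ae_eq_comp (ContinuousMap.coeFn_toLp _ _)).trans ?_
    filter_upwards [he n] with x hx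
    simp [φ, hx, fourier_coe_apply, -fourier_apply]
  have htop := hL.denseRange.topologicalClosure_map_submodule <|
    shiftedHardySpace_eq_top hp (map_coe_mutuallySingular_haarAddCircle hsupp hsing) 0
  rw [Submodule.dense_iff_topologicalClosure_eq_top, eq_top_iff, ← htop, Submodule.map_span]
  refine Submodule.topologicalClosure_mono <| Submodule.span_mono ?_
  rintro _ ⟨_, ⟨n, hn, rfl⟩, rfl⟩
  lift n to ℕ using hn
  exact ⟨n, (hLe n).symm⟩

/-- For a singular Borel probability measure `μ` on `[0,1)`, the linear span
of the exponentials `e_n(x) = exp(2πinx)`, `n ∈ ℕ`, is dense in `L²(μ)`. -/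
theorem span_exponentials_dense
    (μ : Measure ℝ) [IsProbabilityMeasure μ]
    (hsupp : μ (Set.Ico (0 : ℝ) 1)ᶜ = 0)
    (hsing : μ.MutuallySingular MeasureTheory.volume)
    (e : ℕ → Lp ℂ 2 μ)
    (he : ∀ n : ℕ, (e n : ℝ → ℂ) =ᵐ[μ]
      fun x => Complex.exp (2 * Real.pi * Complex.I * n * x)) :
    Dense ((Submodule.span ℂ (Set.range e) : Submodule ℂ (Lp ℂ 2 μ)) : Set (Lp ℂ 2 μ)) :=
  span_exponentials_dense_general (T := 1) (a := 0) (by simp) μ (by simpa using hsupp) hsing e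
    (by simpa using he)
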